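/- For any mixed graph G = (V, E, A) and positive integer k, (−1)^{|V|} χ̂_G(−k) equals the number of pairs (c, O) where c is a k-coloring of V and O is an acyclic orientation of G compatible with c, i.e., c(u) ≤ c(v) for every u→v in O. Here χ̂_G is the strong chromatic polynomial of G, counting colorings c : V → {1,...,k} with c(u) ≠ c(v) for uv ∈ E and c(u) < c(v) for arcs u→v ∈ A. -/

import Mathlib

/-- A mixed graph on vertex set `V`: `E` are the undirected edges (a pair `{u,v}`
may be recorded as `E u v` or `E v u`), `A` are the arcs (directed edges). -/
structure MixedGraph (V : Type*) where
  E : V → V → Prop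
  A : V → V → Prop

/-- A weak proper coloring: distinct colors along edges, weakly increasing along arcs. -/
def MixedGraph.IsWeakColoring {V : Type*} (G : MixedGraph V) {k : ℕ} (c : V → Fin k) : Prop :=
  (∀ u v, G.E u v → c u ≠ c v) ∧ (∀ u v, G.A u v → c u ≤ c v)

/-- The weak chromatic counting function: the number of weak proper `k`-colorings. -/
noncomputable def MixedGraph.weakChi {V : Type*} (G : MixedGraph V) (k : ℕ) : ℕ :=
  Nat.card {c : V → Fin k // G.IsWeakColoring c}

/-- `O` is an orientation of the mixed graph `G`: it contains all arcs, orients every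
undirected edge in exactly one of the two directions, and contains nothing else. -/
def MixedGraph.IsOrientation {V : Type*} (G : MixedGraph V) (O : V → V → Prop) : Prop :=
  (∀ u v, G.A u v → O u v) ∧
  (∀ u v, G.E u v → (O u v ↔ ¬ O v u)) ∧
  (∀ u v, O u v → G.A u v ∨ G.E u v ∨ G.E v u)

/-- A relation is acyclic if it admits no directed cycle. -/
def IsAcyclicRel {V : Type*} (O : V → V → Prop) : Prop :=
  ∀ v, ¬ Relation.TransGen O v v

/-- A mixed graph is acyclic if all of its orientations are acyclic. -/
def MixedGraph.Acyclic {V : Type*} (G : MixedGraph V) : Prop :=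
  ∀ O : V → V → Prop, G.IsOrientation O → IsAcyclicRel O

/-- A coloring `c` is intercompatible with an orientation `O` of `G` if for every `u → v`
in `O` we have `c u ≤ c v` when `uv` is an undirected edge of `G`, and `c u < c v`
when `u → v` is an arc of `G`. -/
def MixedGraph.Intercompatible {V : Type*} (G : MixedGraph V) (O : V → V → Prop)
    {k : ℕ} (c : V → Fin k) : Prop :=
  ∀ u v, O u v → ((G.E u v ∨ G.E v u) → c u ≤ c v) ∧ (G.A u v → c u < c v)

open Finset in
/-- Antidifference of a rational polynomial. -/
lemma exists_antidiff (p : Polynomial ℚ) :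
    ∃ q : Polynomial ℚ, ∀ n : ℕ, q.eval (n : ℚ) = ∑ i ∈ range n, p.eval (i : ℚ) := by
  induction p using Polynomial.induction_on' with
  | add p q hp hq =>
    obtain ⟨a, ha⟩ := hp
    obtain ⟨b, hb⟩ := hq
    exact ⟨a + b, fun n => by simp [ha, hb, sum_add_distrib]⟩
  | monomial m a =>
    refine ⟨Polynomial.C a * ∑ i ∈ range (m + 1),
      Polynomial.C (bernoulli i * ((m + 1).choose i) / (m + 1)) * Polynomial.X ^ (m + 1 - i), fun n => ?_⟩
    simp only [Polynomial.eval_monomial, ← mul_sum, sum_range_pow, Polynomial.eval_mul,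
      Polynomial.eval_C, Polynomial.eval_finsetSum, Polynomial.eval_pow, Polynomial.eval_X]
    congr 1
    refine sum_congr rfl fun i _ => ?_
    ring

namespace RecipAux

open Finset Classical

variable {V : Type*} [Fintype V] (r : V → V → Prop)

/-- Maps supported on `T` with values in `1..k` there. -/
noncomputable def maps (T : Finset V) (k : ℕ) : Finset (V → ℕ) :=
  Fintype.piFinset (fun v => if v ∈ T then Icc 1 k else {0})

lemma mem_maps {T : Finset V} {k : ℕ} {c : V → ℕ} :
    c ∈ maps T k ↔ (∀ v ∈ T, 1 ≤ c v ∧ c v ≤ k) ∧ ∀ v, v ∉ T → c v = 0 := by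
  simp only [maps, Fintype.mem_piFinset]
  constructor
  · intro h
    refine ⟨fun v hv => ?_, fun v hv => ?_⟩
    · simpa [hv] using h v
    · simpa [hv] using h v
  · rintro ⟨h1, h2⟩ v
    by_cases hv : v ∈ T
    · simpa [hv] using h1 v hv
    · simpa [hv] using h2 v hv

/-- strict maps -/
noncomputable def sF (T : Finset V) (k : ℕ) : Finset (V → ℕ) :=
  (maps T k).filter (fun c => ∀ u ∈ T, ∀ v ∈ T, r u v → c u < c v)

/-- weak maps -/
noncomputable def wF (T : Finset V) (k : ℕ) : Finset (V → ℕ) :=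
  (maps T k).filter (fun c => ∀ u ∈ T, ∀ v ∈ T, r u v → c u ≤ c v)

/-- maximal elements -/
noncomputable def mx (T : Finset V) : Finset V := T.filter (fun v => ∀ u ∈ T, ¬ r v u)

lemma mem_sF {T : Finset V} {k : ℕ} {c : V → ℕ} :
    c ∈ sF r T k ↔ ((∀ v ∈ T, 1 ≤ c v ∧ c v ≤ k) ∧ ∀ v, v ∉ T → c v = 0) ∧
      ∀ u ∈ T, ∀ v ∈ T, r u v → c u < c v := by
  simp [sF, mem_maps]

lemma mem_wF {T : Finset V} {k : ℕ} {c : V → ℕ} :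
    c ∈ wF r T k ↔ ((∀ v ∈ T, 1 ≤ c v ∧ c v ≤ k) ∧ ∀ v, v ∉ T → c v = 0) ∧
      ∀ u ∈ T, ∀ v ∈ T, r u v → c u ≤ c v := by
  simp [wF, mem_maps]

lemma mem_mx {T : Finset V} {v : V} : v ∈ mx r T ↔ v ∈ T ∧ ∀ u ∈ T, ¬ r v u := by
  simp [mx]

lemma sF_rec (T : Finset V) (k : ℕ) :
    (sF r T (k+1)).card = ∑ S ∈ (mx r T).powerset, (sF r (T \ S) k).card := by
  rw [card_eq_sum_card_fiberwise (f := fun c => T.filter (fun v => c v = k + 1))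
    (t := (mx r T).powerset)]
  · refine sum_congr rfl fun S hS => ?_
    rw [mem_powerset] at hS
    have hS' : ∀ v ∈ S, v ∈ T ∧ ∀ u ∈ T, ¬ r v u := fun v hv => (mem_mx r).1 (hS hv)
    refine card_bij' (fun c _ v => if v ∈ S then 0 else c v)
      (fun c _ v => if v ∈ S then k + 1 else c v) ?_ ?_ ?_ ?_
    · intro c hc
      simp only [mem_filter, mem_sF, Finset.ext_iff] at hc
      simp only [mem_sF, mem_sdiff]
      grind
    · intro c hc
      simp only [mem_sF, mem_sdiff] at hc
      simp only [mem_filter, mem_sF, Finset.ext_iff]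
      grind
    · intro c hc
      simp only [mem_filter, mem_sF, Finset.ext_iff] at hc
      funext v
      grind
    · intro c hc
      simp only [mem_sF, mem_sdiff] at hc
      funext v
      grind
  · intro c hc
    simp only [mem_coe, mem_sF] at hc
    simp only [mem_coe, mem_powerset]
    intro v hv
    simp only [mem_filter] at hv
    rw [mem_mx]
    refine ⟨hv.1, fun u hu h => ?_⟩
    have := hc.2 v hv.1 u hu h
    have := (hc.1.1 u hu).2
    omega

lemma wF_fib (T S : Finset V) (k : ℕ) (hS : S ⊆ mx r T) :
    (wF r (T \ S) (k+1)).card = ((wF r T (k+1)).filter (fun c => ∀ v ∈ S, c v = k + 1)).card := by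
  have hS' : ∀ v ∈ S, v ∈ T ∧ ∀ u ∈ T, ¬ r v u := fun v hv => (mem_mx r).1 (hS hv)
  symm
  refine card_bij' (fun c _ v => if v ∈ S then 0 else c v)
      (fun c _ v => if v ∈ S then k + 1 else c v) ?_ ?_ ?_ ?_
  · intro c hc
    simp only [mem_filter, mem_wF] at hc
    simp only [mem_wF, mem_sdiff]
    grind
  · intro c hc
    simp only [mem_wF, mem_sdiff] at hc
    simp only [mem_filter, mem_wF]
    grind
  · intro c hc
    simp only [mem_filter, mem_wF] at hc
    funext v
    grind
  · intro c hc
    simp only [mem_wF, mem_sdiff] at hc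
    funext v
    grind

lemma exists_max (hr : IsAcyclicRel r) (U : Finset V) (hU : U.Nonempty) :
    ∃ v ∈ U, ∀ u ∈ U, ¬ r v u := by
  let s : V → V → Prop := fun a b => Relation.TransGen r b a
  have : IsTrans V s := ⟨fun a b c h1 h2 => Relation.TransGen.trans h2 h1⟩
  have : Std.Irrefl s := ⟨fun a h => hr a h⟩
  have wf : WellFounded s := Finite.wellFounded_of_trans_of_irrefl s
  obtain ⟨v, hv, h⟩ := wf.has_min (U : Set V) hU
  exact ⟨v, hv, fun u hu hvu => h u hu (Relation.TransGen.single hvu)⟩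

lemma wF_rec (hr : IsAcyclicRel r) (T : Finset V) (k : ℕ) :
    ((wF r T k).card : ℤ) =
      ∑ S ∈ (mx r T).powerset, (-1) ^ S.card * ((wF r (T \ S) (k+1)).card : ℤ) := by
  have h1 : ∀ S ∈ (mx r T).powerset, (-1 : ℤ) ^ S.card * ((wF r (T \ S) (k+1)).card : ℤ)
      = ∑ c ∈ wF r T (k+1), if ∀ v ∈ S, c v = k + 1 then (-1 : ℤ) ^ S.card else 0 := by
    intro S hS
    rw [wF_fib r T S k (mem_powerset.1 hS), ← sum_filter, sum_const, nsmul_eq_mul, mul_comm]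
  rw [sum_congr rfl h1, sum_comm]
  have h2 : ∀ c ∈ wF r T (k+1), (∑ S ∈ (mx r T).powerset,
      if ∀ v ∈ S, c v = k + 1 then (-1 : ℤ) ^ S.card else 0) = if c ∈ wF r T k then 1 else 0 := by
    intro c hc
    rw [← sum_filter]
    have : (mx r T).powerset.filter (fun S => ∀ v ∈ S, c v = k + 1) =
        ((mx r T).filter (fun v => c v = k + 1)).powerset := by
      ext S
      simp only [mem_filter, mem_powerset, subset_iff]
      grind
    rw [this, sum_powerset_neg_one_pow_card]
    congr 1
    rw [mem_wF] at hc
    apply propext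
    rw [mem_wF, filter_eq_empty_iff]
    constructor
    · intro h
      refine ⟨⟨fun v hv => ⟨(hc.1.1 v hv).1, ?_⟩, hc.1.2⟩, hc.2⟩
      by_contra hlt
      have hk : c v = k + 1 := by have := (hc.1.1 v hv).2; omega
      obtain ⟨w, hw, hmax⟩ := exists_max r hr (T.filter (fun v => c v = k + 1))
        ⟨v, by simp [hv, hk]⟩
      rw [mem_filter] at hw
      refine h ((mem_mx r).2 ⟨hw.1, fun u hu hwu => ?_⟩) hw.2
      refine hmax u ?_ hwu
      have := hc.2 w hw.1 u hu hwu
      have := (hc.1.1 u hu).2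
      rw [mem_filter]
      exact ⟨hu, by omega⟩
    · intro h v hv hk
      have := (h.1.1 v ((mem_mx r).1 hv).1).2
      omega
  rw [sum_congr rfl h2, ← sum_filter, sum_const, nsmul_eq_mul, mul_one]
  congr 2
  ext c
  simp only [mem_filter, mem_wF]
  grind

lemma sdiff_lt {T S : Finset V} (hS : S ⊆ mx r T) (hne : S ≠ ∅) : (T \ S).card < T.card := by
  apply card_lt_card
  obtain ⟨v, hv⟩ := nonempty_iff_ne_empty.2 hne
  have := ((mem_mx r).1 (hS hv)).1
  rw [ssubset_iff_of_subset sdiff_subset]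
  exact ⟨v, this, by simp [hv]⟩

lemma exists_poly (n : ℕ) : ∀ T : Finset V, T.card = n →
    ∃ q : Polynomial ℚ, ∀ k : ℕ, q.eval (k : ℚ) = ((sF r T k).card : ℚ) := by
  induction n using Nat.strong_induction_on with
  | _ n ih =>
  intro T hT
  have h : ∀ S : Finset V, ∃ q : Polynomial ℚ, S ⊆ mx r T → S ≠ ∅ →
      ∀ k : ℕ, q.eval (k : ℚ) = ((sF r (T \ S) k).card : ℚ) := by
    intro S
    by_cases hS : S ⊆ mx r T ∧ S ≠ ∅
    · obtain ⟨q, hq⟩ := ih _ (hT ▸ sdiff_lt r hS.1 hS.2) (T \ S) rfl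
      exact ⟨q, fun _ _ => hq⟩
    · exact ⟨0, fun h1 h2 => absurd ⟨h1, h2⟩ hS⟩
  choose Q hQ using h
  obtain ⟨q, hq⟩ := exists_antidiff (∑ S ∈ (mx r T).powerset.erase ∅, Q S)
  refine ⟨q + Polynomial.C ((sF r T 0).card : ℚ), fun k => ?_⟩
  induction k with
  | zero => simpa using hq 0
  | succ k ihk =>
    rw [sF_rec, ← add_sum_erase _ _ (empty_mem_powerset _), sdiff_empty]
    push_cast
    rw [← ihk]
    have h3 := hq (k+1)
    rw [sum_range_succ, ← hq k] at h3
    push_cast at h3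
    rw [Polynomial.eval_add, h3, Polynomial.eval_add, Polynomial.eval_finsetSum]
    simp only [Polynomial.eval_C]
    have : ∑ S ∈ (mx r T).powerset.erase ∅, (Q S).eval (k : ℚ) =
        ∑ S ∈ (mx r T).powerset.erase ∅, ((sF r (T \ S) k).card : ℚ) := by
      refine sum_congr rfl fun S hS => ?_
      rw [mem_erase, mem_powerset] at hS
      exact hQ S hS.2 hS.1 k
    rw [this]
    ring

lemma poly_ext (p q : Polynomial ℚ) (h : ∀ k : ℕ, 0 < k → p.eval (k : ℚ) = q.eval (k : ℚ)) :
    p = q := by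
  apply Polynomial.eq_of_infinite_eval_eq
  refine Set.Infinite.mono (s := Set.range (fun n : ℕ => ((n + 1 : ℕ) : ℚ))) ?_ ?_
  · rintro _ ⟨n, rfl⟩
    exact h (n+1) n.succ_pos
  · apply Set.infinite_range_of_injective
    intro a b hab
    simpa using hab

/-- The strict order polynomial. -/
noncomputable def P (T : Finset V) : Polynomial ℚ := (exists_poly r _ T rfl).choose

lemma P_spec (T : Finset V) (k : ℕ) : (P r T).eval (k : ℚ) = ((sF r T k).card : ℚ) :=
  (exists_poly r _ T rfl).choose_spec k

lemma P_rec (T : Finset V) (x : ℚ) :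
    (P r T).eval (x + 1) = ∑ S ∈ (mx r T).powerset, (P r (T \ S)).eval x := by
  have : (P r T).comp (Polynomial.X + 1) = ∑ S ∈ (mx r T).powerset, P r (T \ S) := by
    apply poly_ext
    intro k _
    rw [Polynomial.eval_comp, Polynomial.eval_finsetSum]
    simp only [P_spec]
    have := P_spec r T (k+1)
    rw [sF_rec] at this
    push_cast at this
    simpa using this
  have h := congrArg (Polynomial.eval x) this
  simpa [Polynomial.eval_comp, Polynomial.eval_finsetSum] using h

lemma recip (hr : IsAcyclicRel r) (n : ℕ) : ∀ T : Finset V, T.card = n → ∀ k : ℕ,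
    (-1) ^ T.card * (P r T).eval (-(k : ℚ)) = ((wF r T k).card : ℚ) := by
  induction n using Nat.strong_induction_on with
  | _ n ih =>
  intro T hT k
  induction k with
  | zero =>
    have h := P_spec r T 0
    have h0 : (sF r T 0) = wF r T 0 := by
      ext c
      rw [mem_sF, mem_wF]
      grind
    simp only [Nat.cast_zero, neg_zero] at h ⊢
    rw [h, h0]
    rcases T.eq_empty_or_nonempty with rfl | ⟨v, hv⟩
    · simp
    · have : wF r T 0 = ∅ := by
        ext c
        rw [mem_wF]
        simp only [notMem_empty, iff_false]
        intro hc
        have := hc.1.1 v hv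
        omega
      simp [this]
  | succ k ihk =>
    have h1 := P_rec r T (-((k+1 : ℕ) : ℚ))
    have h2 : (((wF r T k).card : ℤ) : ℚ) = _ := congrArg (Int.cast : ℤ → ℚ) (wF_rec r hr T k)
    push_cast at h2
    rw [← add_sum_erase _ _ (empty_mem_powerset _), sdiff_empty] at h1 h2
    have h3 : ∑ S ∈ (mx r T).powerset.erase ∅, (-1 : ℚ) ^ S.card * ((wF r (T \ S) (k+1)).card : ℚ)
        = (-1) ^ T.card * ∑ S ∈ (mx r T).powerset.erase ∅,
          (P r (T \ S)).eval (-((k+1 : ℕ) : ℚ)) := by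
      rw [mul_sum]
      refine sum_congr rfl fun S hS => ?_
      rw [mem_erase, mem_powerset] at hS
      rw [← ih _ (hT ▸ sdiff_lt r hS.2 hS.1) (T \ S) rfl (k+1), ← mul_assoc, ← pow_add]
      have hsub : S ⊆ T := hS.2.trans (filter_subset _ _)
      rw [add_comm, card_sdiff_add_card_eq_card hsub]
    rw [h3] at h2
    have h4 : (-((k+1 : ℕ) : ℚ)) + 1 = -(k : ℚ) := by push_cast; ring
    rw [h4] at h1
    rw [← ihk, h1] at h2
    simp only [card_empty, pow_zero, one_mul] at h2
    linear_combination h2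

lemma card_maps (k : ℕ) (R : (V → ℕ) → Prop) (R' : (V → Fin k) → Prop)
    (h : ∀ c : V → Fin k, R (fun v => (c v : ℕ) + 1) ↔ R' c) :
    ((maps univ k).filter R).card = Nat.card {c : V → Fin k // R' c} := by
  rw [Nat.card_eq_fintype_card, Fintype.card_subtype]
  symm
  refine card_bij (fun c _ v => (c v : ℕ) + 1) ?_ ?_ ?_
  · intro c hc
    simp only [mem_filter, mem_univ, true_and, mem_maps] at hc ⊢
    refine ⟨⟨fun v _ => ⟨by omega, by omega⟩, by simp⟩, (h c).2 hc⟩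
  · intro c _ d _ hcd
    funext v
    have := congrFun hcd v
    exact Fin.ext (by omega)
  · intro c hc
    simp only [mem_filter, mem_maps, mem_univ, true_imp_iff] at hc
    have hE : (fun v => ((⟨c v - 1, by have := hc.1.1 v; omega⟩ : Fin k) : ℕ) + 1) = c := by
      funext v
      have := hc.1.1 v
      simp only
      omega
    refine ⟨fun v => ⟨c v - 1, by have := hc.1.1 v; omega⟩, ?_, hE⟩
    simp only [mem_filter, mem_univ, true_and]
    rw [← h, hE]
    exact hc.2

lemma card_sF (k : ℕ) : (sF r univ k).card =
    Nat.card {c : V → Fin k // ∀ u v, r u v → c u < c v} := by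
  rw [← card_maps k (fun c => ∀ u ∈ univ, ∀ v ∈ univ, r u v → c u < c v)
    (fun c => ∀ u v, r u v → c u < c v) (fun c => by simp), sF]
  congr!

lemma card_wF (k : ℕ) : (wF r univ k).card =
    Nat.card {c : V → Fin k // ∀ u v, r u v → c u ≤ c v} := by
  rw [← card_maps k (fun c => ∀ u ∈ univ, ∀ v ∈ univ, r u v → c u ≤ c v)
    (fun c => ∀ u v, r u v → c u ≤ c v) (fun c => by simp), wF]
  congr!

end RecipAux

open RecipAux in
/-- Reciprocity for the strong chromatic polynomial of a mixed graph (Beck–Bogart–Pham):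
`(-1)^{|V|} χ̂_G(-k)` equals the number of pairs `(c, O)` of a `k`-coloring `c` and an
acyclic orientation `O` of `G` compatible with `c` (i.e. `c u ≤ c v` for every `u → v`
in `O`). -/
theorem stmt19 {V : Type*} [Fintype V] (G : MixedGraph V) (p : Polynomial ℚ)
    (hp : ∀ k : ℕ, 0 < k →
      p.eval (k : ℚ) = Nat.card {c : V → Fin k //
        (∀ u v, G.E u v → c u ≠ c v) ∧ (∀ u v, G.A u v → c u < c v)})
    (k : ℕ) (hk : 0 < k) :
    (-1) ^ Fintype.card V * p.eval (-(k : ℚ)) =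
      Nat.card {q : (V → Fin k) × (V → V → Prop) //
        G.IsOrientation q.2 ∧ IsAcyclicRel q.2 ∧ ∀ u v, q.2 u v → q.1 u ≤ q.1 v} := by
  classical
  let AcOr := {O : V → V → Prop // G.IsOrientation O ∧ IsAcyclicRel O}
  have hpP : p = ∑ O : AcOr, P O.1 Finset.univ := by
    apply poly_ext
    intro n hn
    rw [hp n hn, Polynomial.eval_finsetSum]
    simp only [P_spec, card_sF]
    rw [← Nat.cast_sum, ← Nat.card_sigma]
    congr 1
    symm
    refine Nat.card_congr (Equiv.ofBijective
      (fun x : (O : AcOr) × {c : V → Fin n // ∀ u v, O.1 u v → c u < c v} =>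
        (⟨x.2.1, ?_, ?_⟩ : {c : V → Fin n //
        (∀ u v, G.E u v → c u ≠ c v) ∧ (∀ u v, G.A u v → c u < c v)})) ⟨?_, ?_⟩)
    · obtain ⟨⟨O, hO, hA⟩, c, hc⟩ := x
      intro u v huv
      by_cases h : O u v
      · exact (hc u v h).ne
      · have h' : O v u := by
          by_contra h2
          exact h ((hO.2.1 u v huv).2 h2)
        exact (hc v u h').ne'
    · obtain ⟨⟨O, hO, hA⟩, c, hc⟩ := x
      intro u v huv
      exact hc u v (hO.1 u v huv)
    · have key : ∀ (O O' : V → V → Prop) (c : V → Fin n), G.IsOrientation O →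
          G.IsOrientation O' → (∀ u v, O u v → c u < c v) → (∀ u v, O' u v → c u < c v) →
          ∀ u v, O u v → O' u v := by
        intro O O' c hO hO' hc hc' u v huv
        rcases hO.2.2 u v huv with h | h | h
        · exact hO'.1 u v h
        · by_contra h2
          have h3 : O' v u := by
            by_contra h3
            exact h2 ((hO'.2.1 u v h).2 h3)
          exact lt_asymm (hc u v huv) (hc' v u h3)
        · by_contra h2
          exact lt_asymm (hc u v huv) (hc' v u ((hO'.2.1 v u h).2 h2))
      rintro ⟨⟨O, hO, hA⟩, c, hc⟩ ⟨⟨O', hO', hA'⟩, c', hc'⟩ h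
      simp only [Subtype.mk.injEq] at h
      subst h
      have : O = O' := by
        funext u v
        exact propext ⟨key O O' c hO hO' hc hc' u v, key O' O c hO' hO hc' hc u v⟩
      subst this
      rfl
    · rintro ⟨c, hE, hA⟩
      have hlt : ∀ u v, ((G.A u v ∨ G.E u v ∨ G.E v u) ∧ c u < c v) → c u < c v :=
        fun u v h => h.2
      refine ⟨⟨⟨fun u v => (G.A u v ∨ G.E u v ∨ G.E v u) ∧ c u < c v, ⟨?_, ?_, ?_⟩, ?_⟩,
        c, hlt⟩, rfl⟩
      · exact fun u v h => ⟨Or.inl h, hA u v h⟩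
      · intro u v h
        have h1 := hE u v h
        constructor
        · exact fun h2 h3 => lt_asymm h2.2 h3.2
        · intro h2
          refine ⟨Or.inr (Or.inl h), ?_⟩
          rcases lt_or_gt_of_ne h1 with h3 | h3
          · exact h3
          · exact absurd ⟨Or.inr (Or.inr h), h3⟩ h2
      · exact fun u v h => h.1
      · intro v hv
        have : ∀ a b, Relation.TransGen
            (fun u v => (G.A u v ∨ G.E u v ∨ G.E v u) ∧ c u < c v) a b → c a < c b := by
          intro a b hab
          induction hab with
          | single h => exact h.2
          | tail _ h ih => exact ih.trans h.2
        exact lt_irrefl _ (this v v hv)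
  rw [hpP, Polynomial.eval_finsetSum, Finset.mul_sum]
  have h1 : ∀ O : AcOr, (-1 : ℚ) ^ Fintype.card V * (P O.1 Finset.univ).eval (-(k : ℚ)) =
      (Nat.card {c : V → Fin k // ∀ u v, O.1 u v → c u ≤ c v} : ℚ) := by
    intro O
    rw [← card_wF, ← recip O.1 O.2.2 _ Finset.univ rfl k, Finset.card_univ]
  rw [Finset.sum_congr rfl (fun O _ => h1 O), ← Nat.cast_sum, ← Nat.card_sigma]
  congr 1
  exact Nat.card_congr
    { toFun := fun x => ⟨(x.2.1, x.1.1), x.1.2.1, x.1.2.2, x.2.2⟩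
      invFun := fun q => ⟨⟨q.1.2, q.2.1, q.2.2.1⟩, ⟨q.1.1, q.2.2.2⟩⟩
      left_inv := fun x => rfl
      right_inv := fun q => rfl }
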